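/- Consider the observer target system on (t,x) ∈ [0,∞)×[0,L]: ∂_t ψ̃_i + γ_i ∂_x ψ̃_i = Σ_{j=1}^3 σ_{ij} ψ̃_j + Σ_{j=1}^3 ∫_0^x g_{ij}(x,ξ) ψ̃_j(t,ξ) dξ for i = 1,2,3, and ∂_t χ̃ − μ ∂_x χ̃ = Σ_{j=1}^3 θ_j(x) ψ̃_j + Σ_{j=1}^3 ∫_0^x h_j(x,ξ) ψ̃_j(t,ξ) dξ, with boundary conditions ψ̃_i(t,0) = 0 and χ̃(t,L) = ρ_1 ψ̃_1(t,L) + ρ_2 ψ̃_2(t,L). Then there exist constants M > 0 and λ > 0, depending only on L, γ_1, γ_2, γ_3, μ, the σ_{ij}, the θ_j, ρ_1, ρ_2 and the kernels g_{ij}, h_j, such that every C¹ solution (ψ̃_1, ψ̃_2, ψ̃_3, χ̃) satisfies Σ_{i=1}^3 ‖ψ̃_i(t,·)‖² + ‖χ̃(t,·)‖² ≤ M e^{−λ t} ( Σ_{i=1}^3 ‖ψ̃_i(0,·)‖² + ‖χ̃(0,·)‖² ) for all t ≥ 0; that is, the observer target system is exponentially stable in the L² sense. -/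

import Mathlib

/-!
The `ψ̃` subsystem is transported to the right with zero inflow, and `χ̃` is transported to the left,
driven by `ψ̃` through its source and its inflow at `x = L`. This cascade admits the Lyapunov
functional
`W(t) = ∑ᵢ (1/γᵢ) ∫₀ᴸ e^{-δx} ψ̃ᵢ² dx + (ε/μ) ∫₀ᴸ e^{x} χ̃² dx`.

Differentiating in time and integrating by parts in space (`hasDerivAt_energy_transport`), the
`ψ̃` part contributes `-δ ∫ e^{-δx} |ψ̃|²`, the outflow term `-e^{-δL} |ψ̃(L)|²`, and a source term.
All integral terms are of Volterra type and `e^{-δx} ≤ e^{-δξ}` for `ξ ≤ x`, so the source term is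
at most `K ∫ e^{-δx} |ψ̃|²` with `K` independent of `δ` (`source_bound`). Hence `δ = K + 2` absorbs it
(`psi_energy_rate`). The `χ̃` part contributes its own damping, the inflow term `e^L χ̃(L)²`, and a
source bounded by a multiple of `∫ e^{-δx} |ψ̃|²` (`chi_energy_rate`). A small `ε`, chosen after `δ`,
makes the `ψ̃` terms dominate both (`lyapunov_rate_le`). This gives `W' ≤ -λ W`, hence
`W(t) ≤ e^{-λt} W(0)`, and `W` is equivalent to the squared `L²` norm because the weights are
bounded above and below on `[0, L]`.
-/

/-! ### Energy identities -/

lemma hasDerivAt_left {f : ℝ → ℝ → ℝ} (hf : ContDiff ℝ 1 (Function.uncurry f)) (t x : ℝ) :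
    HasDerivAt (fun τ => f τ x) (fderiv ℝ (Function.uncurry f) (t, x) (1, 0)) t := by
  have h1 : HasDerivAt (fun τ : ℝ => (τ, x)) ((1 : ℝ), (0 : ℝ)) t :=
    (hasDerivAt_id t).prodMk (hasDerivAt_const t x)
  exact (hf.differentiable one_ne_zero (t, x)).hasFDerivAt.comp_hasDerivAt t h1

lemma hasDerivAt_right {f : ℝ → ℝ → ℝ} (hf : ContDiff ℝ 1 (Function.uncurry f)) (t x : ℝ) :
    HasDerivAt (fun y => f t y) (fderiv ℝ (Function.uncurry f) (t, x) (0, 1)) x := by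
  have h1 : HasDerivAt (fun y : ℝ => (t, y)) ((0 : ℝ), (1 : ℝ)) x :=
    (hasDerivAt_const x t).prodMk (hasDerivAt_id x)
  exact (hf.differentiable one_ne_zero (t, x)).hasFDerivAt.comp_hasDerivAt x h1

lemma continuous_deriv_left {f : ℝ → ℝ → ℝ} (hf : ContDiff ℝ 1 (Function.uncurry f)) :
    Continuous fun p : ℝ × ℝ => deriv (fun τ => f τ p.2) p.1 := by
  have : (fun p : ℝ × ℝ => deriv (fun τ => f τ p.2) p.1) =
      fun p => fderiv ℝ (Function.uncurry f) p (1, 0) := by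
    funext p; exact (hasDerivAt_left hf p.1 p.2).deriv
  rw [this]
  exact (hf.continuous_fderiv one_ne_zero).clm_apply continuous_const

lemma continuous_deriv_right {f : ℝ → ℝ → ℝ} (hf : ContDiff ℝ 1 (Function.uncurry f)) :
    Continuous fun p : ℝ × ℝ => deriv (fun y => f p.1 y) p.2 := by
  have : (fun p : ℝ × ℝ => deriv (fun y => f p.1 y) p.2) =
      fun p => fderiv ℝ (Function.uncurry f) p (0, 1) := by
    funext p; exact (hasDerivAt_right hf p.1 p.2).deriv
  rw [this]
  exact (hf.continuous_fderiv one_ne_zero).clm_apply continuous_const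

lemma hasDerivAt_energy {f : ℝ → ℝ → ℝ} (hf : ContDiff ℝ 1 (Function.uncurry f)) (a L t : ℝ) :
    HasDerivAt (fun τ => ∫ x in (0 : ℝ)..L, Real.exp (a * x) * f τ x ^ 2)
      (∫ x in (0 : ℝ)..L, Real.exp (a * x) * (2 * f t x * deriv (fun τ => f τ x) t)) t := by
  have hc : Continuous fun p : ℝ × ℝ => f p.1 p.2 := hf.continuous
  have hd := continuous_deriv_left hf
  have hG : Continuous fun p : ℝ × ℝ =>
      Real.exp (a * p.2) * (2 * f p.1 p.2 * deriv (fun τ => f τ p.2) p.1) := by fun_prop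
  obtain ⟨C, hC⟩ := ((isCompact_Icc (a := t - 1) (b := t + 1)).prod
    (isCompact_uIcc (a := 0) (b := L))).exists_bound_of_continuousOn hG.continuousOn
  refine (intervalIntegral.hasDerivAt_integral_of_dominated_loc_of_deriv_le
    (F' := fun τ x => Real.exp (a * x) * (2 * f τ x * deriv (fun τ => f τ x) τ))
    (bound := fun _ => C) (Icc_mem_nhds (a := t - 1) (b := t + 1) (by linarith) (by linarith))
    ?_ ?_ ?_ ?_ ?_ ?_).2
  · refine .of_forall fun τ => Continuous.aestronglyMeasurable ?_
    have := hc.comp (Continuous.prodMk_right τ)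
    simp only [Function.comp_def] at this
    fun_prop
  · refine Continuous.intervalIntegrable ?_ _ _
    have := hc.comp (Continuous.prodMk_right t)
    simp only [Function.comp_def] at this
    fun_prop
  · exact (hG.comp (Continuous.prodMk_right t)).aestronglyMeasurable
  · exact .of_forall fun x hx τ hτ => hC (τ, x) ⟨hτ, Set.uIoc_subset_uIcc hx⟩
  · exact intervalIntegrable_const
  · refine .of_forall fun x _ τ _ => ?_
    have h1 := (hasDerivAt_left hf τ x).differentiableAt.hasDerivAt
    refine ((h1.pow 2).const_mul _).congr_deriv ?_
    simp

/-- Energy identity for the transport operator `∂ₜ + c ∂ₓ`: differentiation under the integral,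
followed by integration by parts of `e^{ax} · 2 f ∂ₓf` in `x`. The velocity `c` may have either
sign. -/
lemma hasDerivAt_energy_transport {f : ℝ → ℝ → ℝ} (hf : ContDiff ℝ 1 (Function.uncurry f))
    (a c L t : ℝ) :
    HasDerivAt (fun τ => ∫ x in (0 : ℝ)..L, Real.exp (a * x) * f τ x ^ 2)
      (c * a * (∫ x in (0 : ℝ)..L, Real.exp (a * x) * f t x ^ 2)
        - c * (Real.exp (a * L) * f t L ^ 2 - f t 0 ^ 2)
        + ∫ x in (0 : ℝ)..L, Real.exp (a * x) *
            (2 * f t x * (deriv (fun τ => f τ x) t + c * deriv (fun y => f t y) x))) t := by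
  refine (hasDerivAt_energy hf a L t).congr_deriv ?_
  have hc : Continuous fun x => f t x := hf.continuous.comp (Continuous.prodMk_right t)
  have h1 : Continuous fun x => deriv (fun τ => f τ x) t :=
    (continuous_deriv_left hf).comp (Continuous.prodMk_right t)
  have h2 : Continuous fun x => deriv (fun y => f t y) x :=
    (continuous_deriv_right hf).comp (Continuous.prodMk_right t)
  have key : ∫ x in (0 : ℝ)..L, (a * (Real.exp (a * x) * f t x ^ 2)
      + Real.exp (a * x) * (2 * f t x * deriv (fun y => f t y) x))
      = Real.exp (a * L) * f t L ^ 2 - f t 0 ^ 2 := by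
    rw [intervalIntegral.integral_eq_sub_of_hasDerivAt
      (f := fun x => Real.exp (a * x) * f t x ^ 2)]
    · simp
    · intro x _
      have h3 := (hasDerivAt_right hf t x).differentiableAt.hasDerivAt
      refine ((((hasDerivAt_id x).const_mul a).exp).mul (h3.pow 2)).congr_deriv ?_
      simp; ring
    · exact Continuous.intervalIntegrable (by fun_prop) _ _
  rw [← key, intervalIntegral.integral_add, intervalIntegral.integral_const_mul]
  · have : ∀ x, Real.exp (a * x) *
        (2 * f t x * (deriv (fun τ => f τ x) t + c * deriv (fun y => f t y) x))
        = Real.exp (a * x) * (2 * f t x * deriv (fun τ => f τ x) t)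
          + c * (Real.exp (a * x) * (2 * f t x * deriv (fun y => f t y) x)) := by
      intro x; ring
    simp_rw [this]
    rw [intervalIntegral.integral_add, intervalIntegral.integral_const_mul]
    · ring
    all_goals exact Continuous.intervalIntegrable (by fun_prop) _ _
  all_goals exact Continuous.intervalIntegrable (by fun_prop) _ _

/-! ### Source terms -/

/-- Cauchy–Schwarz against the constant function `1`, from expanding
`0 ≤ ∫ (|u| - m/x)²` with `m = ∫ |u|`. -/
lemma sq_integral_abs_le {u : ℝ → ℝ} (hu : Continuous u) {x : ℝ} (hx : 0 ≤ x) :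
    (∫ ξ in (0 : ℝ)..x, |u ξ|) ^ 2 ≤ x * ∫ ξ in (0 : ℝ)..x, u ξ ^ 2 := by
  rcases hx.eq_or_lt with rfl | hx
  · simp
  set m := ∫ ξ in (0 : ℝ)..x, |u ξ| with hm
  have h0 : 0 ≤ ∫ ξ in (0 : ℝ)..x, (|u ξ| - m / x) ^ 2 :=
    intervalIntegral.integral_nonneg hx.le fun _ _ => sq_nonneg _
  have h1 : ∀ ξ, (|u ξ| - m / x) ^ 2 = u ξ ^ 2 - (2 * (m / x)) * |u ξ| + (m / x) ^ 2 := by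
    intro ξ; rw [sub_sq, sq_abs]; ring
  simp_rw [h1] at h0
  rw [intervalIntegral.integral_add, intervalIntegral.integral_sub,
    intervalIntegral.integral_const_mul, ← hm, intervalIntegral.integral_const] at h0
  · simp only [sub_zero, smul_eq_mul] at h0
    have h2 := mul_nonneg hx.le h0
    field_simp at h2
    nlinarith
  all_goals exact Continuous.intervalIntegrable (by fun_prop) _ _

/-- Pointwise form of `source_bound`. The Volterra structure enters here: since `ξ ≤ x`, the weight
`e^{-δx}` is at most `e^{-δξ}` and can be moved inside the integral over `ξ`, so the constant does
not depend on `δ`. -/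
lemma source_pointwise {L C δ x : ℝ} (hL : 0 < L) (hδ : 0 ≤ δ)
    (hx0 : 0 ≤ x) (hxL : x ≤ L) {u : Fin 3 → ℝ → ℝ} (hu : ∀ j, Continuous (u j))
    {s : Fin 3 → ℝ} {k : Fin 3 → ℝ → ℝ} (hs : ∀ j, |s j| ≤ C)
    (hk : ∀ j ξ, 0 ≤ ξ → ξ ≤ x → |k j ξ| ≤ C) :
    Real.exp (-δ * x) * ((∑ j, s j * u j x) + ∑ j, ∫ ξ in (0 : ℝ)..x, k j ξ * u j ξ) ^ 2 ≤
      6 * C ^ 2 * ((∑ j, Real.exp (-δ * x) * u j x ^ 2)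
        + L * ∑ j, ∫ ξ in (0 : ℝ)..L, Real.exp (-δ * ξ) * u j ξ ^ 2) := by
  have ha : ∀ j, Real.exp (-δ * x) * (s j * u j x) ^ 2
      ≤ C ^ 2 * (Real.exp (-δ * x) * u j x ^ 2) := by
    intro j
    have : s j ^ 2 ≤ C ^ 2 := sq_le_sq.2 ((hs j).trans (le_abs_self C))
    have := mul_le_mul_of_nonneg_right this
      (by positivity : 0 ≤ Real.exp (-δ * x) * u j x ^ 2)
    linarith
  have hb : ∀ j, Real.exp (-δ * x) * (∫ ξ in (0 : ℝ)..x, k j ξ * u j ξ) ^ 2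
      ≤ C ^ 2 * (L * ∫ ξ in (0 : ℝ)..L, Real.exp (-δ * ξ) * u j ξ ^ 2) := by
    intro j
    have huj := hu j
    have h1 : |∫ ξ in (0 : ℝ)..x, k j ξ * u j ξ| ≤ ∫ ξ in (0 : ℝ)..x, C * |u j ξ| := by
      refine intervalIntegral.norm_integral_le_of_norm_le (f := fun ξ => k j ξ * u j ξ)
        (g := fun ξ => C * |u j ξ|) hx0 (.of_forall fun ξ hξ => ?_)
        (Continuous.intervalIntegrable (by fun_prop) _ _)
      rw [norm_mul]
      exact mul_le_mul_of_nonneg_right (hk j ξ hξ.1.le hξ.2) (norm_nonneg _)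
    rw [intervalIntegral.integral_const_mul] at h1
    have h2 : (∫ ξ in (0 : ℝ)..x, k j ξ * u j ξ) ^ 2
        ≤ C ^ 2 * (L * ∫ ξ in (0 : ℝ)..x, u j ξ ^ 2) := by
      have h3 := sq_le_sq.2 (h1.trans (le_abs_self _))
      have h4 := sq_integral_abs_le huj hx0
      have h5 : 0 ≤ ∫ ξ in (0 : ℝ)..x, u j ξ ^ 2 :=
        intervalIntegral.integral_nonneg hx0 fun _ _ => sq_nonneg _
      rw [mul_pow] at h3
      refine h3.trans (mul_le_mul_of_nonneg_left (h4.trans ?_) (sq_nonneg C))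
      exact mul_le_mul_of_nonneg_right hxL h5
    have h6 : Real.exp (-δ * x) * ∫ ξ in (0 : ℝ)..x, u j ξ ^ 2
        ≤ ∫ ξ in (0 : ℝ)..L, Real.exp (-δ * ξ) * u j ξ ^ 2 := by
      rw [← intervalIntegral.integral_const_mul]
      refine (intervalIntegral.integral_mono_on hx0
        (f := fun ξ => Real.exp (-δ * x) * u j ξ ^ 2)
        (g := fun ξ => Real.exp (-δ * ξ) * u j ξ ^ 2)
        (Continuous.intervalIntegrable (by fun_prop) _ _)
        (Continuous.intervalIntegrable (by fun_prop) _ _) fun ξ hξ => ?_).trans ?_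
      · refine mul_le_mul_of_nonneg_right (Real.exp_le_exp.2 ?_) (sq_nonneg _)
        nlinarith [hξ.2]
      · refine intervalIntegral.integral_mono_interval le_rfl hx0 hxL
          (.of_forall fun ξ => by positivity) (Continuous.intervalIntegrable (by fun_prop) _ _)
    have h7 := mul_le_mul_of_nonneg_left h2 (Real.exp_pos (-δ * x)).le
    have h8 := mul_le_mul_of_nonneg_left h6 (by positivity : 0 ≤ C ^ 2 * L)
    linarith
  have hsum : ∀ a b : Fin 3 → ℝ,
      ((∑ j, a j) + ∑ j, b j) ^ 2 ≤ 6 * ((∑ j, a j ^ 2) + ∑ j, b j ^ 2) := by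
    intro a b
    have h1 := sq_sum_le_card_mul_sum_sq (s := Finset.univ) (f := a)
    have h2 := sq_sum_le_card_mul_sum_sq (s := Finset.univ) (f := b)
    simp only [Finset.card_univ, Fintype.card_fin, Nat.cast_ofNat] at h1 h2
    nlinarith [sq_nonneg ((∑ j, a j) - ∑ j, b j)]
  have h9 := mul_le_mul_of_nonneg_left
    (hsum (fun j => s j * u j x) (fun j => ∫ ξ in (0 : ℝ)..x, k j ξ * u j ξ))
    (Real.exp_pos (-δ * x)).le
  refine h9.trans ?_
  have h10 := Finset.sum_le_sum fun j (_ : j ∈ Finset.univ) => ha j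
  have h11 := Finset.sum_le_sum fun j (_ : j ∈ Finset.univ) => hb j
  simp only [← Finset.mul_sum] at h10 h11 ⊢
  linarith

/-- The weighted square norm of a source term (local part plus Volterra integral part) is controlled
by the weighted square norms of the `u j`, with a constant independent of `δ`. -/
lemma source_bound {L C δ : ℝ} (hL : 0 < L) (hδ : 0 ≤ δ)
    {u : Fin 3 → ℝ → ℝ} (hu : ∀ j, Continuous (u j)) {R : ℝ → ℝ} (hR : Continuous R)
    {s : Fin 3 → ℝ → ℝ} {k : Fin 3 → ℝ → ℝ → ℝ}
    (hs : ∀ j x, 0 ≤ x → x ≤ L → |s j x| ≤ C)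
    (hk : ∀ j x ξ, 0 ≤ ξ → ξ ≤ x → x ≤ L → |k j x ξ| ≤ C)
    (hRe : ∀ x, 0 ≤ x → x ≤ L →
      R x = (∑ j, s j x * u j x) + ∑ j, ∫ ξ in (0 : ℝ)..x, k j x ξ * u j ξ) :
    ∫ x in (0 : ℝ)..L, Real.exp (-δ * x) * R x ^ 2 ≤
      6 * C ^ 2 * (1 + L ^ 2) * ∑ j, ∫ x in (0 : ℝ)..L, Real.exp (-δ * x) * u j x ^ 2 := by
  refine (intervalIntegral.integral_mono_on hL.le
    (g := fun x => 6 * C ^ 2 * ((∑ j, Real.exp (-δ * x) * u j x ^ 2)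
        + L * ∑ j, ∫ ξ in (0 : ℝ)..L, Real.exp (-δ * ξ) * u j ξ ^ 2))
    (Continuous.intervalIntegrable (by fun_prop) _ _)
    (Continuous.intervalIntegrable (by fun_prop) _ _) fun x hx => ?_).trans ?_
  · rw [hRe x hx.1 hx.2]
    exact source_pointwise hL hδ hx.1 hx.2 hu (fun j => hs j x hx.1 hx.2)
      fun j ξ h0 h1 => hk j x ξ h0 h1 hx.2
  · rw [intervalIntegral.integral_const_mul, intervalIntegral.integral_add,
      intervalIntegral.integral_finsetSum, intervalIntegral.integral_const]
    · simp only [sub_zero, smul_eq_mul]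
      apply le_of_eq; ring
    · exact fun j _ => Continuous.intervalIntegrable (by have := hu j; fun_prop) _ _
    all_goals exact Continuous.intervalIntegrable (by fun_prop) _ _

/-! ### Lyapunov estimates -/

/-- For velocity `c > 0` and zero inflow at `x = 0`, the weight `e^{-δx}` produces the damping term
`-δ` and the outflow term at `x = L`; the source is split by `2ab ≤ a² + b²`. -/
lemma psi_energy_rate {f : ℝ → ℝ → ℝ} (hf : ContDiff ℝ 1 (Function.uncurry f))
    {L c δ t : ℝ} (hL : 0 < L) (hc : 0 < c) (hf0 : f t 0 = 0) :
    ∃ D, HasDerivAt (fun τ => ∫ x in (0 : ℝ)..L, Real.exp (-δ * x) * f τ x ^ 2) D t ∧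
      D / c ≤ -δ * (∫ x in (0 : ℝ)..L, Real.exp (-δ * x) * f t x ^ 2)
        - Real.exp (-δ * L) * f t L ^ 2
        + 1 / c * ((∫ x in (0 : ℝ)..L, Real.exp (-δ * x) * f t x ^ 2)
          + ∫ x in (0 : ℝ)..L, Real.exp (-δ * x) *
            (deriv (fun τ => f τ x) t + c * deriv (fun y => f t y) x) ^ 2) := by
  refine ⟨_, hasDerivAt_energy_transport hf (-δ) c L t, ?_⟩
  have hc0 : Continuous fun x => f t x := hf.continuous.comp (Continuous.prodMk_right t)
  have h1 : Continuous fun x => deriv (fun τ => f τ x) t :=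
    (continuous_deriv_left hf).comp (Continuous.prodMk_right t)
  have h2 : Continuous fun x => deriv (fun y => f t y) x :=
    (continuous_deriv_right hf).comp (Continuous.prodMk_right t)
  have h3 : (∫ x in (0 : ℝ)..L, Real.exp (-δ * x) *
            (2 * f t x * (deriv (fun τ => f τ x) t + c * deriv (fun y => f t y) x)))
      ≤ (∫ x in (0 : ℝ)..L, Real.exp (-δ * x) * f t x ^ 2)
          + ∫ x in (0 : ℝ)..L, Real.exp (-δ * x) *
            (deriv (fun τ => f τ x) t + c * deriv (fun y => f t y) x) ^ 2 := by
    rw [← intervalIntegral.integral_add]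
    · refine intervalIntegral.integral_mono_on hL.le
        (Continuous.intervalIntegrable (by fun_prop) _ _)
        (Continuous.intervalIntegrable (by fun_prop) _ _) fun x _ => ?_
      rw [← mul_add]
      exact mul_le_mul_of_nonneg_left (two_mul_le_add_sq _ _) (Real.exp_pos _).le
    all_goals exact Continuous.intervalIntegrable (by fun_prop) _ _
  rw [div_le_iff₀ hc, hf0]
  have h4 : ∀ X : ℝ, 1 / c * X * c = X := by intro X; field_simp
  rw [add_mul, h4]
  linarith

/-- For velocity `-μ < 0` the increasing weight `e^x` produces damping. Half of it absorbs the cross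
term with the source; the remaining source term is expressed with the weight `e^{-δx}` used for the
`ψ` components, at the cost of the factor `e^{L + δL}`. -/
lemma chi_energy_rate {f : ℝ → ℝ → ℝ} (hf : ContDiff ℝ 1 (Function.uncurry f))
    {L μ δ t : ℝ} (hL : 0 < L) (hμ : 0 < μ) (hδ : 0 ≤ δ) :
    ∃ D, HasDerivAt (fun τ => ∫ x in (0 : ℝ)..L, Real.exp (1 * x) * f τ x ^ 2) D t ∧
      D / μ ≤ Real.exp L * f t L ^ 2
        - (∫ x in (0 : ℝ)..L, Real.exp (1 * x) * f t x ^ 2) / 2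
        + 2 / μ ^ 2 * (Real.exp (L + δ * L) * ∫ x in (0 : ℝ)..L, Real.exp (-δ * x) *
            (deriv (fun τ => f τ x) t - μ * deriv (fun y => f t y) x) ^ 2) := by
  refine ⟨_, hasDerivAt_energy_transport hf 1 (-μ) L t, ?_⟩
  have hc0 : Continuous fun x => f t x := hf.continuous.comp (Continuous.prodMk_right t)
  have h1 : Continuous fun x => deriv (fun τ => f τ x) t :=
    (continuous_deriv_left hf).comp (Continuous.prodMk_right t)
  have h2 : Continuous fun x => deriv (fun y => f t y) x :=
    (continuous_deriv_right hf).comp (Continuous.prodMk_right t)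
  have h3 : (∫ x in (0 : ℝ)..L, Real.exp (1 * x) *
            (2 * f t x * (deriv (fun τ => f τ x) t + -μ * deriv (fun y => f t y) x)))
      ≤ μ / 2 * (∫ x in (0 : ℝ)..L, Real.exp (1 * x) * f t x ^ 2)
          + 2 / μ * Real.exp (L + δ * L) * ∫ x in (0 : ℝ)..L, Real.exp (-δ * x) *
            (deriv (fun τ => f τ x) t - μ * deriv (fun y => f t y) x) ^ 2 := by
    rw [← intervalIntegral.integral_const_mul, ← intervalIntegral.integral_const_mul,
      ← intervalIntegral.integral_add]
    · refine intervalIntegral.integral_mono_on hL.le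
        (Continuous.intervalIntegrable (by fun_prop) _ _)
        (Continuous.intervalIntegrable (by fun_prop) _ _) fun x hx => ?_
      set r := deriv (fun τ => f τ x) t - μ * deriv (fun y => f t y) x with hr
      have h4 : deriv (fun τ => f τ x) t + -μ * deriv (fun y => f t y) x = r := by
        rw [hr]; ring
      have h5 : 2 * f t x * r ≤ μ / 2 * f t x ^ 2 + 2 / μ * r ^ 2 := by
        have : μ / 2 * f t x ^ 2 + 2 / μ * r ^ 2 - 2 * f t x * r
            = (μ * f t x - 2 * r) ^ 2 / (2 * μ) := by field_simp; ring
        have h6 : 0 ≤ (μ * f t x - 2 * r) ^ 2 / (2 * μ) := by positivity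
        linarith
      have h7 : Real.exp (1 * x) ≤ Real.exp (L + δ * L) * Real.exp (-δ * x) := by
        rw [← Real.exp_add]
        refine Real.exp_le_exp.2 ?_
        nlinarith [hx.2]
      rw [h4]
      have h8 := mul_le_mul_of_nonneg_left h5 (Real.exp_pos (1 * x)).le
      have h9 := mul_le_mul_of_nonneg_right h7 (by positivity : 0 ≤ 2 / μ * r ^ 2)
      linarith
    all_goals exact Continuous.intervalIntegrable (by fun_prop) _ _
  rw [div_le_iff₀ hμ]
  have h10 : 0 ≤ μ * f t 0 ^ 2 := by positivity
  have h11 : ∀ X : ℝ, 2 / μ ^ 2 * X * μ = 2 / μ * X := by intro X; field_simp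
  rw [one_mul] at *
  rw [add_mul, h11]
  linarith

/-- Grönwall's inequality on `[0, ∞)`: `e^{lam t} W t` is nonincreasing. -/
lemma exp_decay_of_deriv_le {W W' : ℝ → ℝ} {lam : ℝ}
    (hW : ∀ t, 0 ≤ t → HasDerivAt W (W' t) t) (hle : ∀ t, 0 ≤ t → W' t ≤ -lam * W t)
    {t : ℝ} (ht : 0 ≤ t) : W t ≤ Real.exp (-lam * t) * W 0 := by
  have hd : ∀ s, 0 ≤ s → HasDerivAt (fun s => Real.exp (lam * s) * W s)
      (Real.exp (lam * s) * (lam * W s + W' s)) s := fun s hs => by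
    refine ((((hasDerivAt_id s).const_mul lam).exp).mul (hW s hs)).congr_deriv ?_
    simp; ring
  have hanti : AntitoneOn (fun s => Real.exp (lam * s) * W s) (Set.Ici 0) := by
    refine antitoneOn_of_deriv_nonpos (convex_Ici 0)
      (fun s hs => (hd s hs).continuousAt.continuousWithinAt)
      (fun s hs => (hd s (interior_subset hs)).differentiableAt.differentiableWithinAt)
      fun s hs => ?_
    have hs0 : 0 ≤ s := Set.mem_Ici.1 (interior_subset hs)
    rw [(hd s hs0).deriv]
    exact mul_nonpos_of_nonneg_of_nonpos (Real.exp_pos _).le (by linarith [hle s hs0])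
  have h1 := hanti Set.self_mem_Ici ht ht
  simp only [mul_zero, Real.exp_zero, one_mul] at h1
  have h2 := mul_le_mul_of_nonneg_left h1 (Real.exp_pos (-lam * t)).le
  rwa [← mul_assoc, ← Real.exp_add, show -lam * t + lam * t = 0 by ring, Real.exp_zero,
    one_mul] at h2

lemma exists_bound_coeff {L : ℝ} {θ : Fin 3 → ℝ → ℝ}
    (hθ : ∀ j, ContinuousOn (θ j) (Set.Icc 0 L)) {h : Fin 3 → ℝ → ℝ → ℝ}
    (hh : ∀ j, ContinuousOn (Function.uncurry (h j))
      {p : ℝ × ℝ | 0 ≤ p.2 ∧ p.2 ≤ p.1 ∧ p.1 ≤ L}) :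
    ∃ C : ℝ, 0 ≤ C ∧ (∀ j x, 0 ≤ x → x ≤ L → |θ j x| ≤ C) ∧
      ∀ j x ξ, 0 ≤ ξ → ξ ≤ x → x ≤ L → |h j x ξ| ≤ C := by
  have hT : IsCompact {p : ℝ × ℝ | 0 ≤ p.2 ∧ p.2 ≤ p.1 ∧ p.1 ≤ L} := by
    refine (isCompact_Icc (a := ((0 : ℝ), (0 : ℝ))) (b := (L, L))).of_isClosed_subset ?_ ?_
    · exact (isClosed_le continuous_const continuous_snd).inter
        ((isClosed_le continuous_snd continuous_fst).inter
          (isClosed_le continuous_fst continuous_const))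
    · rintro ⟨x, ξ⟩ ⟨h1, h2, h3⟩
      exact ⟨⟨h1.trans h2, h1⟩, ⟨h3, h2.trans h3⟩⟩
  choose A hA using fun j => isCompact_Icc.exists_bound_of_continuousOn (hθ j)
  choose B hB using fun j => hT.exists_bound_of_continuousOn (hh j)
  have hAle : ∀ j, |A j| ≤ ∑ i, |A i| := fun j =>
    Finset.single_le_sum (f := fun i => |A i|) (fun i _ => abs_nonneg _) (Finset.mem_univ j)
  have hBle : ∀ j, |B j| ≤ ∑ i, |B i| := fun j =>
    Finset.single_le_sum (f := fun i => |B i|) (fun i _ => abs_nonneg _) (Finset.mem_univ j)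
  have hA0 : 0 ≤ ∑ i, |A i| := Finset.sum_nonneg fun i _ => abs_nonneg _
  have hB0 : 0 ≤ ∑ i, |B i| := Finset.sum_nonneg fun i _ => abs_nonneg _
  refine ⟨(∑ i, |A i|) + ∑ i, |B i|, by positivity, fun j x h0 h1 => ?_,
    fun j x ξ h0 h1 h2 => ?_⟩
  · have := hA j x ⟨h0, h1⟩
    rw [Real.norm_eq_abs] at this
    linarith [le_abs_self (A j), hAle j]
  · have := hB j (x, ξ) ⟨h0, h1, h2⟩
    simp only [Real.norm_eq_abs, Function.uncurry] at this
    linarith [le_abs_self (B j), hBle j]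

/-- The algebra behind `W' ≤ -lam W` at a fixed time, for `W = ∑ Pᵢ/γᵢ + ε U/μ`. Here `f i` and
`fχ` are the values of `ψᵢ` and `χ` at `x = L`, and `R i`, `S` are the weighted square norms of the
sources. The damping rate `(∑ 1/γⱼ)(1 + N) + 2` leaves `-2 ∑ Pᵢ` after the sources of the `ψᵢ` are
absorbed; `hε1` lets the outflow of the `ψᵢ` dominate the inflow of `χ`, and `hε2` lets `∑ Pᵢ`
dominate the source of `χ`. -/
lemma lyapunov_rate_le {γ : Fin 3 → ℝ} (hγ : ∀ i, 0 < γ i) {μ ρ₁ ρ₂ N e E B ε lam : ℝ}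
    (hE : 0 ≤ E) (hB : 0 ≤ B) (hε : 0 < ε)
    (hε1 : ε * (E * (ρ₁ ^ 2 + ρ₂ ^ 2)) ≤ e) (hε2 : ε * (B * N) ≤ 1)
    (hlam1 : ∀ i, lam / γ i ≤ 1) (hlam2 : lam / μ ≤ 1 / 2)
    {P R f D : Fin 3 → ℝ} {U S D' fχ : ℝ} (hP : ∀ i, 0 ≤ P i) (hU : 0 ≤ U)
    (hR : ∀ i, R i ≤ N * ∑ j, P j) (hS : S ≤ N * ∑ j, P j)
    (hD : ∀ i, D i / γ i ≤ -((∑ j, 1 / γ j) * (1 + N) + 2) * P i - e * f i ^ 2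
      + 1 / γ i * (P i + R i))
    (hD' : D' / μ ≤ E * fχ ^ 2 - U / 2 + B * S) (hfχ : fχ = ρ₁ * f 0 + ρ₂ * f 1) :
    (∑ i, D i / γ i) + ε * (D' / μ) ≤ -lam * ((∑ i, P i / γ i) + ε * (U / μ)) := by
  set Q := ∑ j, P j with hQ
  have hPQ : ∀ i, P i ≤ Q := fun i =>
    Finset.single_le_sum (f := P) (fun i _ => hP i) (Finset.mem_univ i)
  have hQ0 : 0 ≤ Q := Finset.sum_nonneg fun i _ => hP i
  set K := (∑ j, 1 / γ j) * (1 + N) with hK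
  have h1 : ∑ i, D i / γ i ≤ ∑ i, (-(K + 2) * P i - e * f i ^ 2 + 1 / γ i * ((1 + N) * Q)) := by
    refine Finset.sum_le_sum fun i _ => (hD i).trans ?_
    have : 1 / γ i * (P i + R i) ≤ 1 / γ i * ((1 + N) * Q) :=
      mul_le_mul_of_nonneg_left (by linarith [hPQ i, hR i]) (one_div_pos.2 (hγ i)).le
    linarith
  rw [Finset.sum_add_distrib, Finset.sum_sub_distrib, ← Finset.mul_sum, ← Finset.mul_sum,
    ← Finset.sum_mul, ← hQ] at h1
  set F := ∑ i, f i ^ 2 with hF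
  have h2 : fχ ^ 2 ≤ (ρ₁ ^ 2 + ρ₂ ^ 2) * F := by
    rw [hfχ, hF, Fin.sum_univ_three]
    have : 0 ≤ (ρ₁ ^ 2 + ρ₂ ^ 2) * f 2 ^ 2 := by positivity
    nlinarith [sq_nonneg (ρ₁ * f 1 - ρ₂ * f 0)]
  have hF0 : 0 ≤ F := Finset.sum_nonneg fun i _ => sq_nonneg _
  have h3 : ε * (E * fχ ^ 2) ≤ e * F := by
    have h4 := mul_le_mul_of_nonneg_left h2 (mul_nonneg hε.le hE)
    have h5 := mul_le_mul_of_nonneg_right hε1 hF0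
    linarith
  have h6 : ε * (B * S) ≤ Q := by
    have h7 := mul_le_mul_of_nonneg_left hS (mul_nonneg hε.le hB)
    have h8 := mul_le_mul_of_nonneg_right hε2 hQ0
    linarith
  have h9 := mul_le_mul_of_nonneg_left hD' hε.le
  have h10 : lam * ∑ i, P i / γ i ≤ Q := by
    rw [Finset.mul_sum]
    refine Finset.sum_le_sum fun i _ => ?_
    have := mul_le_mul_of_nonneg_right (hlam1 i) (hP i)
    calc lam * (P i / γ i) = lam / γ i * P i := by ring
      _ ≤ P i := by linarith
  have h11 : lam * (ε * (U / μ)) ≤ ε * U / 2 := by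
    have := mul_le_mul_of_nonneg_right hlam2 (mul_nonneg hε.le hU)
    calc lam * (ε * (U / μ)) = lam / μ * (ε * U) := by ring
      _ ≤ ε * U / 2 := by linarith
  have h12 : (∑ i, 1 / γ i) * ((1 + N) * Q) = K * Q := by rw [hK]; ring
  rw [h12] at h1
  linarith

lemma weighted_bounds {u : ℝ → ℝ} (hu : Continuous u) {L a c₁ c₂ : ℝ} (hL : 0 < L)
    (h1 : ∀ x, 0 ≤ x → x ≤ L → c₁ ≤ Real.exp (a * x))
    (h2 : ∀ x, 0 ≤ x → x ≤ L → Real.exp (a * x) ≤ c₂) :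
    c₁ * (∫ x in (0 : ℝ)..L, u x ^ 2) ≤ ∫ x in (0 : ℝ)..L, Real.exp (a * x) * u x ^ 2 ∧
    ∫ x in (0 : ℝ)..L, Real.exp (a * x) * u x ^ 2 ≤ c₂ * ∫ x in (0 : ℝ)..L, u x ^ 2 := by
  rw [← intervalIntegral.integral_const_mul, ← intervalIntegral.integral_const_mul]
  constructor <;>
  refine intervalIntegral.integral_mono_on hL.le
    (Continuous.intervalIntegrable (by fun_prop) _ _)
    (Continuous.intervalIntegrable (by fun_prop) _ _) fun x hx =>
      mul_le_mul_of_nonneg_right ?_ (sq_nonneg _)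
  · exact h1 x hx.1 hx.2
  · exact h2 x hx.1 hx.2

/-! ### Exponential stability -/

theorem observer_target_system_exponential_stability
    (L : ℝ) (hL : 0 < L)
    (γ : Fin 3 → ℝ) (hγ : ∀ i, 0 < γ i)
    (μ : ℝ) (hμ : 0 < μ)
    (σ : Fin 3 → Fin 3 → ℝ) (ρ₁ ρ₂ : ℝ)
    (θ : Fin 3 → ℝ → ℝ)
    (hθ : ∀ j, ContinuousOn (θ j) (Set.Icc 0 L))
    -- kernels g_{ij} and h_j, continuous on the triangle T = {0 ≤ ξ ≤ x ≤ L}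
    (g : Fin 3 → Fin 3 → ℝ → ℝ → ℝ) (h : Fin 3 → ℝ → ℝ → ℝ)
    (hgC : ∀ i j, ContinuousOn (Function.uncurry (g i j))
      {p : ℝ × ℝ | 0 ≤ p.2 ∧ p.2 ≤ p.1 ∧ p.1 ≤ L})
    (hhC : ∀ j, ContinuousOn (Function.uncurry (h j))
      {p : ℝ × ℝ | 0 ≤ p.2 ∧ p.2 ≤ p.1 ∧ p.1 ≤ L}) :
    ∃ M > (0:ℝ), ∃ lam > (0:ℝ),
      ∀ (ψ : Fin 3 → ℝ → ℝ → ℝ) (χ : ℝ → ℝ → ℝ),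
        (∀ i, ContDiff ℝ 1 (Function.uncurry (ψ i))) →
        ContDiff ℝ 1 (Function.uncurry χ) →
        -- interior equations of the observer target system
        (∀ i, ∀ t x : ℝ, 0 ≤ t → 0 ≤ x → x ≤ L →
          deriv (fun τ => ψ i τ x) t + γ i * deriv (fun y => ψ i t y) x
            = (∑ j, σ i j * ψ j t x)
              + ∑ j, ∫ ξ in (0:ℝ)..x, g i j x ξ * ψ j t ξ) →
        (∀ t x : ℝ, 0 ≤ t → 0 ≤ x → x ≤ L →
          deriv (fun τ => χ τ x) t - μ * deriv (fun y => χ t y) x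
            = (∑ j, θ j x * ψ j t x)
              + ∑ j, ∫ ξ in (0:ℝ)..x, h j x ξ * ψ j t ξ) →
        -- boundary conditions
        (∀ i, ∀ t : ℝ, 0 ≤ t → ψ i t 0 = 0) →
        (∀ t : ℝ, 0 ≤ t → χ t L = ρ₁ * ψ 0 t L + ρ₂ * ψ 1 t L) →
        ∀ t : ℝ, 0 ≤ t →
          (∑ i, ∫ x in (0:ℝ)..L, (ψ i t x) ^ 2) + (∫ x in (0:ℝ)..L, (χ t x) ^ 2)
            ≤ M * Real.exp (-lam * t) *
              ((∑ i, ∫ x in (0:ℝ)..L, (ψ i 0 x) ^ 2)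
                + (∫ x in (0:ℝ)..L, (χ 0 x) ^ 2)) := by
  choose Cψ hCψ0 hCψs hCψk using fun i =>
    exists_bound_coeff (L := L) (θ := fun j _ => σ i j) (fun j => continuousOn_const) (hgC i)
  obtain ⟨Cχ, hCχ0, hCχs, hCχk⟩ := exists_bound_coeff hθ hhC
  set C := (∑ i, Cψ i) + Cχ with hCdef
  have hCψC : ∀ i, Cψ i ≤ C := fun i => by
    have := Finset.single_le_sum (f := Cψ) (fun i _ => hCψ0 i) (Finset.mem_univ i)
    linarith
  have hsum0 : 0 ≤ ∑ i, Cψ i := Finset.sum_nonneg fun i _ => hCψ0 i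
  have hCχC : Cχ ≤ C := by linarith
  set N := 6 * C ^ 2 * (1 + L ^ 2) with hNdef
  have hN : 0 ≤ N := by positivity
  set Γ := ∑ j, 1 / γ j with hΓdef
  have hγinv : ∀ i, 0 < 1 / γ i := fun i => one_div_pos.2 (hγ i)
  have hΓi : ∀ i, 1 / γ i ≤ Γ := fun i =>
    Finset.single_le_sum (f := fun i => 1 / γ i) (fun i _ => (hγinv i).le) (Finset.mem_univ i)
  have hΓ : 0 < Γ := (hγinv 0).trans_le (hΓi 0)
  have hγsum : ∀ i, γ i ≤ ∑ j, γ j := fun i =>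
    Finset.single_le_sum (f := γ) (fun i _ => (hγ i).le) (Finset.mem_univ i)
  have hγs0 : 0 < ∑ j, γ j := (hγ 0).trans_le (hγsum 0)
  set δ := Γ * (1 + N) + 2 with hδdef
  have hδ : 0 < δ := by positivity
  set e := Real.exp (-δ * L) with hedef
  have he : 0 < e := Real.exp_pos _
  set B := 2 / μ ^ 2 * Real.exp (L + δ * L) with hBdef
  have hB : 0 ≤ B := by positivity
  -- The two summands beside `1` are what the inflow and the source of `χ` require of `1 / ε`.
  set ε := 1 / (1 + Real.exp L * (ρ₁ ^ 2 + ρ₂ ^ 2) / e + B * N) with hεdef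
  have hε : 0 < ε := by positivity
  have hε1 : ε * (Real.exp L * (ρ₁ ^ 2 + ρ₂ ^ 2)) ≤ e := by
    rw [hεdef, one_div_mul_eq_div, div_le_iff₀ (by positivity)]
    have h1 : e * (Real.exp L * (ρ₁ ^ 2 + ρ₂ ^ 2) / e) = Real.exp L * (ρ₁ ^ 2 + ρ₂ ^ 2) :=
      mul_div_cancel₀ _ he.ne'
    have h2 : 0 ≤ e * (B * N) := by positivity
    linarith
  have hε2 : ε * (B * N) ≤ 1 := by
    rw [hεdef, one_div_mul_eq_div, div_le_one (by positivity)]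
    have : 0 ≤ Real.exp L * (ρ₁ ^ 2 + ρ₂ ^ 2) / e := by positivity
    linarith
  -- `lam ≤ γ i` and `lam ≤ μ / 2`.
  set lam := 1 / (Γ + 2 / μ) with hlamdef
  have hlam : 0 < lam := by positivity
  have hlam1 : ∀ i, lam / γ i ≤ 1 := fun i => by
    rw [div_eq_mul_one_div, hlamdef, one_div_mul_eq_div, div_le_one (by positivity)]
    have : 0 < 2 / μ := by positivity
    linarith [hΓi i]
  have hlam2 : lam / μ ≤ 1 / 2 := by
    rw [div_eq_mul_one_div, hlamdef, one_div_mul_eq_div, div_le_iff₀ (by positivity)]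
    have : 1 / μ = 1 / 2 * (2 / μ) := by ring
    linarith
  refine ⟨((∑ j, γ j) / e + μ / ε) * (Γ + ε * Real.exp L / μ), by positivity, lam, hlam, ?_⟩
  intro ψ χ hψ hχ heqψ heqχ hbψ hbχ
  set P : Fin 3 → ℝ → ℝ := fun i t => ∫ x in (0 : ℝ)..L, Real.exp (-δ * x) * ψ i t x ^ 2
    with hPdef
  set U : ℝ → ℝ := fun t => ∫ x in (0 : ℝ)..L, Real.exp (1 * x) * χ t x ^ 2 with hUdef
  have hP0 : ∀ i t, 0 ≤ P i t := fun i t =>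
    intervalIntegral.integral_nonneg hL.le fun x _ => by positivity
  have hU0 : ∀ t, 0 ≤ U t := fun t =>
    intervalIntegral.integral_nonneg hL.le fun x _ => by positivity
  have hψc : ∀ i t, Continuous (ψ i t) := fun i t =>
    (hψ i).continuous.comp (Continuous.prodMk_right t)
  have hχc : ∀ t, Continuous (χ t) := fun t => hχ.continuous.comp (Continuous.prodMk_right t)
  -- The derivative of the Lyapunov functional `W`, with `W' ≤ -lam * W`, at times `t ≥ 0`.
  have hWd : ∀ t, ∃ D, 0 ≤ t →
      HasDerivAt (fun t => (∑ i, P i t / γ i) + ε * (U t / μ)) D t ∧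
      D ≤ -lam * ((∑ i, P i t / γ i) + ε * (U t / μ)) := by
    intro t
    by_cases ht : 0 ≤ t
    swap
    · exact ⟨0, fun h => absurd h ht⟩
    choose D hD hDle using fun i =>
      psi_energy_rate (δ := δ) (hψ i) hL (hγ i) (hbψ i t ht)
    obtain ⟨D', hD', hD'le⟩ := chi_energy_rate (δ := δ) (t := t) hχ hL hμ hδ.le
    rw [← mul_assoc (2 / μ ^ 2)] at hD'le
    refine ⟨(∑ i, D i / γ i) + ε * (D' / μ), fun _ => ⟨?_, ?_⟩⟩
    · exact (HasDerivAt.fun_sum fun i _ => (hD i).div_const (γ i)).add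
        ((hD'.div_const μ).const_mul ε)
    · refine lyapunov_rate_le hγ (Real.exp_pos L).le hB hε hε1 hε2 hlam1 hlam2
        (fun i => hP0 i t) (hU0 t) ?_ ?_ hDle hD'le (hbχ t ht)
      · intro i
        have hc1 := (continuous_deriv_left (hψ i)).comp (Continuous.prodMk_right t)
        have hc2 := (continuous_deriv_right (hψ i)).comp (Continuous.prodMk_right t)
        exact source_bound hL hδ.le (fun j => hψc j t) (hc1.add (hc2.const_mul (γ i)))
          (fun j x h0 h1 => (hCψs i j x h0 h1).trans (hCψC i))
          (fun j x ξ h0 h1 h2 => (hCψk i j x ξ h0 h1 h2).trans (hCψC i))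
          (fun x h0 h1 => heqψ i t x ht h0 h1)
      · have hc1 := (continuous_deriv_left hχ).comp (Continuous.prodMk_right t)
        have hc2 := (continuous_deriv_right hχ).comp (Continuous.prodMk_right t)
        exact source_bound hL hδ.le (fun j => hψc j t) (hc1.sub (hc2.const_mul μ))
          (fun j x h0 h1 => (hCχs j x h0 h1).trans hCχC)
          (fun j x ξ h0 h1 h2 => (hCχk j x ξ h0 h1 h2).trans hCχC)
          (fun x h0 h1 => heqχ t x ht h0 h1)
  choose W' hW' using hWd
  intro t ht
  have hdecay := exp_decay_of_deriv_le (fun s hs => (hW' s hs).1) (fun s hs => (hW' s hs).2) ht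
  -- Equivalence of `W` with the unweighted energy.
  have hψw := fun i s => weighted_bounds (hψc i s) (a := -δ) (c₁ := e) (c₂ := 1) hL
    (fun x _ h1 => Real.exp_le_exp.2 (by nlinarith))
    (fun x h0 _ => Real.exp_le_one_iff.2 (by nlinarith))
  have hχw := fun s => weighted_bounds (hχc s) (a := 1) (c₁ := 1) (c₂ := Real.exp L) hL
    (fun x h0 _ => Real.one_le_exp (by linarith))
    (fun x _ h1 => Real.exp_le_exp.2 (by linarith))
  have hIψ : ∀ i s, 0 ≤ ∫ x in (0 : ℝ)..L, ψ i s x ^ 2 := fun i s =>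
    intervalIntegral.integral_nonneg hL.le fun x _ => sq_nonneg _
  have hIχ : ∀ s, 0 ≤ ∫ x in (0 : ℝ)..L, χ s x ^ 2 := fun s =>
    intervalIntegral.integral_nonneg hL.le fun x _ => sq_nonneg _
  have hlow : (∑ i, ∫ x in (0 : ℝ)..L, ψ i t x ^ 2) + (∫ x in (0 : ℝ)..L, χ t x ^ 2)
      ≤ ((∑ j, γ j) / e + μ / ε) * ((∑ i, P i t / γ i) + ε * (U t / μ)) := by
    have hV0 : 0 ≤ ∑ i, P i t / γ i :=
      Finset.sum_nonneg fun i _ => div_nonneg (hP0 i t) (hγ i).le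
    have hU1 : 0 ≤ ε * (U t / μ) := mul_nonneg hε.le (div_nonneg (hU0 t) hμ.le)
    have h1 : ∑ i, ∫ x in (0 : ℝ)..L, ψ i t x ^ 2 ≤ (∑ j, γ j) / e * ∑ i, P i t / γ i := by
      rw [Finset.mul_sum]
      refine Finset.sum_le_sum fun i _ => ?_
      have h2 := (hψw i t).1
      rw [← le_div_iff₀' he] at h2
      refine h2.trans ?_
      have h3 : P i t / e = γ i / e * (P i t / γ i) := by
        have := (hγ i).ne'
        field_simp
      change P i t / e ≤ _
      rw [h3]
      exact mul_le_mul_of_nonneg_right (div_le_div_of_nonneg_right (hγsum i) he.le)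
        (div_nonneg (hP0 i t) (hγ i).le)
    have h4 : ∫ x in (0 : ℝ)..L, χ t x ^ 2 ≤ μ / ε * (ε * (U t / μ)) := by
      have h5 : μ / ε * (ε * (U t / μ)) = U t := by
        have := hε.ne'
        field_simp
      rw [h5]
      have := (hχw t).1
      rwa [one_mul] at this
    have h6 : 0 ≤ (∑ j, γ j) / e * (ε * (U t / μ)) := mul_nonneg (by positivity) hU1
    have h7 : 0 ≤ μ / ε * ∑ i, P i t / γ i := mul_nonneg (by positivity) hV0
    linarith
  have hup : (∑ i, P i 0 / γ i) + ε * (U 0 / μ) ≤ (Γ + ε * Real.exp L / μ) *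
      ((∑ i, ∫ x in (0 : ℝ)..L, ψ i 0 x ^ 2) + (∫ x in (0 : ℝ)..L, χ 0 x ^ 2)) := by
    have h1 : ∑ i, P i 0 / γ i ≤ Γ * ∑ i, ∫ x in (0 : ℝ)..L, ψ i 0 x ^ 2 := by
      rw [Finset.mul_sum]
      refine Finset.sum_le_sum fun i _ => ?_
      have h2 := (hψw i 0).2
      rw [one_mul] at h2
      rw [div_eq_mul_one_div, mul_comm]
      exact mul_le_mul (hΓi i) h2 (hP0 i 0) hΓ.le
    have h4 : ε * (U 0 / μ) ≤ ε * Real.exp L / μ * ∫ x in (0 : ℝ)..L, χ 0 x ^ 2 := by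
      have h5 := mul_le_mul_of_nonneg_left (hχw 0).2 (div_pos hε hμ).le
      calc ε * (U 0 / μ) = ε / μ * U 0 := by ring
        _ ≤ _ := h5
        _ = _ := by ring
    have h6 : 0 ≤ Γ * ∫ x in (0 : ℝ)..L, χ 0 x ^ 2 := mul_nonneg hΓ.le (hIχ 0)
    have h7 : 0 ≤ ε * Real.exp L / μ * ∑ i, ∫ x in (0 : ℝ)..L, ψ i 0 x ^ 2 :=
      mul_nonneg (by positivity) (Finset.sum_nonneg fun i _ => hIψ i 0)
    linarith
  have hm : 0 ≤ (∑ j, γ j) / e + μ / ε := by positivity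
  calc _ ≤ _ := hlow
    _ ≤ _ := mul_le_mul_of_nonneg_left hdecay hm
    _ ≤ ((∑ j, γ j) / e + μ / ε) * (Real.exp (-lam * t) * _) :=
      mul_le_mul_of_nonneg_left (mul_le_mul_of_nonneg_left hup (Real.exp_pos _).le) hm
    _ = _ := by ring
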